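/- arXiv:2301.05365 — 6 statements merged into one kernel-verified Lean document; each statement's English description precedes it below -/
import Mathlib

section
/- Under the proportionality hypothesis H₀^∝, the weighted Monte Carlo randomization p-value stochastically dominates the uniform distribution: for every α ∈ [0,1], the probability under the joint law h that p(D̃⁽⁰⁾, …, D̃⁽ᵐ⁾) ≤ α is at most α; that is, Σ_{(d₀,…,d_m) ∈ 𝒟^(m+1) : p(d₀,…,d_m) ≤ α} h(d₀,…,d_m) ≤ α. -/
open scoped NNReal Classical BigOperators

noncomputable section

/-- The joint law of the tuple `(D̃⁽⁰⁾, …, D̃⁽ᵐ⁾)`: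
`h(d₀, …, d_m) = f(d₀) · ∏_{k=1}^m q(d_k | d₀)`. Here `q e d` denotes `q(e | d)`. -/
def jointLaw {D : Type*} (f : D → ℝ≥0) (q : D → D → ℝ≥0) (m : ℕ)
    (d : Fin (m + 1) → D) : ℝ≥0 :=
  f (d 0) * ∏ k ∈ Finset.univ.erase (0 : Fin (m + 1)), q (d k) (d 0)

/-- `σ_i` : the involution of `𝒟^(m+1)` swapping coordinates `0` and `i`. -/
def swapTuple {D : Type*} (m : ℕ) (i : Fin (m + 1)) (d : Fin (m + 1) → D) :
    Fin (m + 1) → D :=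
  d ∘ Equiv.swap 0 i

/-- Numerator of the weight `w_i`: `f̂(d_i) · ∏_{k ≠ i} q(d_k | d_i)`. -/
def wNum {D : Type*} (q : D → D → ℝ≥0) (fhat : D → ℝ≥0) (m : ℕ)
    (i : Fin (m + 1)) (d : Fin (m + 1) → D) : ℝ≥0 :=
  fhat (d i) * ∏ k ∈ Finset.univ.erase i, q (d k) (d i)

/-- The weight `w_i(d₀, …, d_m)`; in `ℝ≥0`, division by zero yields `0`,
matching the convention that `w_i = 0` when the denominator vanishes. -/
def weight {D : Type*} (q : D → D → ℝ≥0) (fhat : D → ℝ≥0) (m : ℕ)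
    (i : Fin (m + 1)) (d : Fin (m + 1) → D) : ℝ≥0 :=
  wNum q fhat m i d / ∑ j, wNum q fhat m j d

/-- The weighted MC randomization p-value
`p(d₀, …, d_m) = Σ_{i=0}^m w_i · 1[S(d_i) ≥ S(d₀)]`. -/
def pValue {D : Type*} (q : D → D → ℝ≥0) (fhat : D → ℝ≥0) (m : ℕ)
    (S : D → ℝ) (d : Fin (m + 1) → D) : ℝ≥0 :=
  ∑ i, weight q fhat m i d * (if S (d 0) ≤ S (d i) then 1 else 0)

/-- The proportionality hypothesis `H₀^∝`: for every tuple putting positive mass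
on at least one of its swaps, there is a constant `K > 0` (not depending on `i`)
with `f̂(d_i) = K · f(d_i)` for all `i`. -/
def PropHyp {D : Type*} (f : D → ℝ≥0) (q : D → D → ℝ≥0) (fhat : D → ℝ≥0)
    (m : ℕ) : Prop :=
  ∀ d : Fin (m + 1) → D,
    (∃ i, 0 < jointLaw f q m (swapTuple m i d)) →
      ∃ K : ℝ≥0, 0 < K ∧ ∀ i, fhat (d i) = K * f (d i)

/-! Set `v i d = f(d_i) ∏_{k ≠ i} q(d_k | d_i)`. This family is equivariant under permutations of
the coordinates, so the mass rejected under `h = v 0` equals the mass rejected under each `v i`,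
where the `i`-th point plays the role of the observed data. For a fixed tuple, the rejected indices
together carry at most the fraction `α` of `∑ i, v i d`: the rejected index of smallest score has a
tail containing all of them. Averaging over `i` gives the bound for `f̂ = f`, and by
proportionality `f̂` and `f` give the same weights on every tuple that `h` charges. -/

section FiniteWeights

variable {ι M β : Type*} [Fintype ι]

/-- The total `w`-weight of the indices whose score `s` is at least that of `i`; an unnormalized
p-value. -/
def tailWeight [AddCommMonoid M] [LE β] (w : ι → M) (s : ι → β) (i : ι) : M :=
  ∑ j with s i ≤ s j, w j

/-- The weight of `i` if the test with weights `w` and scores `s` rejects at level `α` when `i` is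
the observed index, and `0` otherwise. The condition `p ≤ α` is multiplied out, so that no division
by the total weight occurs. -/
def rejectedWeight [LE β] (w : ι → ℝ≥0) (s : ι → β) (α : ℝ≥0) (i : ι) : ℝ≥0 :=
  if tailWeight w s i ≤ α * ∑ j, w j then w i else 0

lemma tailWeight_comp_perm [AddCommMonoid M] [LE β] (w : ι → M) (s : ι → β)
    (σ : Equiv.Perm ι) (i : ι) :
    tailWeight (w ∘ σ) (s ∘ σ) i = tailWeight w s (σ i) :=
  Finset.sum_equiv σ (by simp) (by simp)

lemma rejectedWeight_comp_perm [LE β] (w : ι → ℝ≥0) (s : ι → β) (α : ℝ≥0)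
    (σ : Equiv.Perm ι) (i : ι) :
    rejectedWeight (w ∘ σ) (s ∘ σ) α i = rejectedWeight w s α (σ i) := by
  simp only [rejectedWeight, tailWeight_comp_perm, Function.comp_apply, Equiv.sum_comp σ w]

lemma rejectedWeight_le [LE β] (w : ι → ℝ≥0) (s : ι → β) (α : ℝ≥0) (i : ι) :
    rejectedWeight w s α i ≤ w i := by
  unfold rejectedWeight
  split_ifs
  · exact le_rfl
  · exact zero_le

lemma sum_filter_tailWeight_le [AddCommMonoid M] [PartialOrder M]
    [CanonicallyOrderedAdd M] [LinearOrder β] (w : ι → M) (s : ι → β) (c : M) :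
    ∑ i with tailWeight w s i ≤ c, w i ≤ c := by
  rcases (Finset.univ.filter fun i ↦ tailWeight w s i ≤ c).eq_empty_or_nonempty with
    hempty | hnonempty
  · simp [hempty]
  · obtain ⟨i, hi, hmin⟩ := Finset.exists_min_image _ s hnonempty
    calc ∑ j with tailWeight w s j ≤ c, w j
        ≤ tailWeight w s i :=
          Finset.sum_le_sum_of_subset fun j hj ↦ by simpa using hmin j hj
      _ ≤ c := (Finset.mem_filter.1 hi).2

lemma sum_rejectedWeight_le [LinearOrder β] (w : ι → ℝ≥0) (s : ι → β) (α : ℝ≥0) :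
    ∑ i, rejectedWeight w s α i ≤ α * ∑ i, w i := by
  simp only [rejectedWeight, ← Finset.sum_filter]
  convert sum_filter_tailWeight_le w s (α * ∑ i, w i)

end FiniteWeights

section Equivariance

variable {ι D M β : Type*}

/-- A family of functions of a tuple, indexed by the coordinates of that tuple, which is equivariant
under permutations of the coordinates. This is the form in which exchangeability is used. -/
def PermEquivariant (F : ι → (ι → D) → M) : Prop :=
  ∀ (σ : Equiv.Perm ι) (i : ι) (d : ι → D), F i (d ∘ σ) = F (σ i) d

namespace PermEquivariant

lemma comp_swap {F : ι → (ι → D) → M} (hF : PermEquivariant F) (i j : ι) :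
    F i ∘ (Equiv.swap i j).arrowCongr (Equiv.refl D) = F j := by
  funext d
  simpa [Function.comp_def, Equiv.arrowCongr] using hF (Equiv.swap i j) i d

protected lemma hasSum [AddCommMonoid M] [TopologicalSpace M] {F : ι → (ι → D) → M}
    (hF : PermEquivariant F) {i : ι} {a : M} (h : HasSum (F i) a) (j : ι) : HasSum (F j) a := by
  rw [← hF.comp_swap i j]
  exact (Equiv.hasSum_iff _).2 h

variable [Fintype ι]

protected lemma hasSum_sum [AddCommMonoid M] [TopologicalSpace M] [ContinuousAdd M]
    {F : ι → (ι → D) → M} (hF : PermEquivariant F) {i : ι} {a : M} (h : HasSum (F i) a) :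
    HasSum (fun d ↦ ∑ j, F j d) (Fintype.card ι • a) := by
  simpa using hasSum_sum fun j (_ : j ∈ Finset.univ) ↦ hF.hasSum h j

protected lemma rejectedWeight [LE β] {v : ι → (ι → D) → ℝ≥0} (hv : PermEquivariant v)
    (S : D → β) (α : ℝ≥0) :
    PermEquivariant fun i d ↦ rejectedWeight (v · d) (S ∘ d) α i := fun σ i d ↦ by
  have hcomp : (v · (d ∘ σ)) = (v · d) ∘ σ := funext fun j ↦ hv σ j d
  simp only [hcomp, ← Function.comp_assoc, rejectedWeight_comp_perm]

theorem tsum_rejectedWeight_le [LinearOrder β] {v : ι → (ι → D) → ℝ≥0}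
    (hv : PermEquivariant v) (S : D → β) (α : ℝ≥0) {i : ι} {a : ℝ≥0} (hi : HasSum (v i) a) :
    ∑' d, rejectedWeight (v · d) (S ∘ d) α i ≤ α * a := by
  have hcard : 0 < (Fintype.card ι : ℝ≥0) := by
    exact_mod_cast Fintype.card_pos_iff.2 ⟨i⟩
  have hrejected : Summable fun d ↦ rejectedWeight (v · d) (S ∘ d) α i :=
    NNReal.summable_of_le (fun d ↦ rejectedWeight_le (v · d) (S ∘ d) α i) hi.summable
  have hsum : Fintype.card ι • ∑' d, rejectedWeight (v · d) (S ∘ d) α i ≤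
      α * (Fintype.card ι • a) :=
    hasSum_le (fun d ↦ sum_rejectedWeight_le (v · d) (S ∘ d) α)
      ((hv.rejectedWeight S α).hasSum_sum hrejected.hasSum) ((hv.hasSum_sum hi).mul_left α)
  rw [nsmul_eq_mul, nsmul_eq_mul, mul_left_comm] at hsum
  exact le_of_mul_le_mul_left hsum hcard

end PermEquivariant

end Equivariance

lemma hasSum_of_tsum_eq_of_ne_zero {X M : Type*} [AddCommMonoid M] [TopologicalSpace M]
    {g : X → M} {a : M} (hg : ∑' x, g x = a) (ha : a ≠ 0) : HasSum g a := by
  have hsummable : Summable g :=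
    not_imp_comm.1 tsum_eq_zero_of_not_summable (hg.trans_ne ha)
  exact hg ▸ hsummable.hasSum

lemma tsum_pi_prod_eq_prod_tsum {n : ℕ} {D : Fin n → Type*} (g : ∀ k, D k → ENNReal) :
    ∑' d : ∀ k, D k, ∏ k, g k (d k) = ∏ k, ∑' x, g k x := by
  induction n with
  | zero => simp
  | succ n ih =>
    rw [← (Fin.consEquiv D).tsum_eq, ENNReal.tsum_prod', Fin.prod_univ_succ, ← ih,
      ← ENNReal.tsum_mul_right]
    simp [Fin.consEquiv, Fin.prod_univ_succ, ENNReal.tsum_mul_left]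

section RandomizationTest

variable {D : Type*} {f fhat : D → ℝ≥0} {q : D → D → ℝ≥0} {m : ℕ}

lemma jointLaw_cons (f : D → ℝ≥0) (q : D → D → ℝ≥0) (x : D) (e : Fin m → D) :
    jointLaw f q m (Fin.cons x e : Fin (m + 1) → D) = f x * ∏ k, q (e k) x := by
  simp [jointLaw, Fin.univ_succ]

lemma hasSum_jointLaw (hf : HasSum f 1) (hq : ∀ d, HasSum (q · d) 1) :
    HasSum (jointLaw f q m) 1 := by
  have hresample (x : D) : ∑' e : Fin m → D, ∏ k, (q (e k) x : ENNReal) = 1 := by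
    simp [tsum_pi_prod_eq_prod_tsum fun _ y ↦ (q y x : ENNReal), ENNReal.tsum_coe_eq (hq x)]
  rw [← ENNReal.hasSum_coe, ENNReal.summable.hasSum_iff,
    ← (Fin.consEquiv fun _ : Fin (m + 1) ↦ D).tsum_eq, ENNReal.tsum_prod']
  simp [Fin.consEquiv, jointLaw_cons, ENNReal.tsum_mul_left, hresample, ENNReal.tsum_coe_eq hf]

lemma permEquivariant_wNum (q : D → D → ℝ≥0) (f : D → ℝ≥0) (m : ℕ) :
    PermEquivariant (wNum q f m) := fun σ i d ↦
  congrArg (f (d (σ i)) * ·) (Finset.prod_equiv σ (by simp) (by simp))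

lemma pValue_eq_tailWeight_div (q : D → D → ℝ≥0) (f : D → ℝ≥0) (S : D → ℝ)
    (d : Fin (m + 1) → D) :
    pValue q f m S d = tailWeight (wNum q f m · d) (S ∘ d) 0 / ∑ j, wNum q f m j d := by
  simp [pValue, weight, tailWeight, Finset.sum_filter, Finset.sum_div, ite_div]

lemma weight_eq_of_proportional {d : Fin (m + 1) → D} {K : ℝ≥0} (hK : K ≠ 0)
    (h : ∀ i, fhat (d i) = K * f (d i)) (i : Fin (m + 1)) :
    weight q fhat m i d = weight q f m i d := by
  have hnum (j : Fin (m + 1)) : wNum q fhat m j d = K * wNum q f m j d := by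
    simp only [wNum, h, mul_assoc]
  simp only [weight, hnum, ← Finset.mul_sum, mul_div_mul_left _ _ hK]

lemma PropHyp.pValue_eq (hprop : PropHyp f q fhat m) (S : D → ℝ) {d : Fin (m + 1) → D}
    (hd : jointLaw f q m d ≠ 0) : pValue q fhat m S d = pValue q f m S d := by
  obtain ⟨K, hK, hfhat⟩ := hprop d ⟨0, by simpa [swapTuple] using pos_iff_ne_zero.2 hd⟩
  simp only [pValue, weight_eq_of_proportional hK.ne' hfhat]

lemma PropHyp.ite_pValue_le_eq_rejectedWeight (hprop : PropHyp f q fhat m) (S : D → ℝ) (α : ℝ≥0)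
    (d : Fin (m + 1) → D) :
    (if pValue q fhat m S d ≤ α then jointLaw f q m d else 0) =
      rejectedWeight (wNum q f m · d) (S ∘ d) α 0 := by
  have hlaw : jointLaw f q m d = wNum q f m 0 d := rfl
  by_cases hd : jointLaw f q m d = 0
  · simp [rejectedWeight, ← hlaw, hd]
  · have htotal : 0 < ∑ j, wNum q f m j d :=
      Finset.sum_pos_iff.2 ⟨0, Finset.mem_univ 0, pos_iff_ne_zero.2 hd⟩
    simp only [rejectedWeight, hprop.pValue_eq S hd, pValue_eq_tailWeight_div,
      div_le_iff₀ htotal, hlaw]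

theorem weighted_mc_randomization_test_valid_general (S : D → ℝ) (hf : ∑' d, f d = 1)
    (hq : ∀ d, ∑' e, q e d = 1) (hprop : PropHyp f q fhat m) (α : ℝ≥0) :
    (∑' d : Fin (m + 1) → D,
      if pValue q fhat m S d ≤ α then jointLaw f q m d else 0) ≤ α := by
  have hmass : HasSum (wNum q f m 0) 1 :=
    hasSum_jointLaw (hasSum_of_tsum_eq_of_ne_zero hf one_ne_zero) fun d ↦
      hasSum_of_tsum_eq_of_ne_zero (hq d) one_ne_zero
  simpa only [hprop.ite_pValue_le_eq_rejectedWeight S α, mul_one] using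
    (permEquivariant_wNum q f m).tsum_rejectedWeight_le S α hmass

end RandomizationTest

/-- **Theorem (validity of the weighted MC randomization test).**
Under the proportionality hypothesis `H₀^∝`, the weighted MC randomization
p-value stochastically dominates the uniform distribution. -/
theorem weighted_mc_randomization_test_valid
    {D : Type*} [Countable D]
    (f : D → ℝ≥0) (q : D → D → ℝ≥0) (fhat : D → ℝ≥0) (S : D → ℝ)
    (m : ℕ) (hm : 1 ≤ m)
    (hf : ∑' d, f d = 1)
    (hq : ∀ d, ∑' e, q e d = 1)
    (hprop : PropHyp f q fhat m) :
    ∀ α : ℝ≥0, α ≤ 1 →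
      (∑' d : Fin (m + 1) → D,
        if pValue q fhat m S d ≤ α then jointLaw f q m d else 0) ≤ α :=
  fun α _ ↦ weighted_mc_randomization_test_valid_general S hf hq hprop α
end
end

section
/- The swap-orbit sum of the joint density is invariant under swaps: for every tuple (d₀, …, d_m) ∈ 𝒟^(m+1) and every i ∈ {0, …, m}, Σ_{j=0}^m h(σ_j(σ_i(d₀, …, d_m))) = Σ_{j=0}^m h(σ_j(d₀, …, d_m)). (Indeed, the list (h(σ_j(σ_i(d₀,…,d_m))))_{j=0}^m is a rearrangement of the list (h(σ_j(d₀,…,d_m)))_{j=0}^m, obtained by exchanging the entries at positions 0 and i.) -/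
open scoped NNReal BigOperators

noncomputable section

/-!
The density `h` depends symmetrically on the coordinates other than the zeroth, so for a
permutation `s` of the coordinates, `h (d ∘ s)` depends only on `d` and on the index `s 0` moved
into position `0`. Both `s ∘ (0 j)` and `(0 (s j))` move `s j` there, hence precomposing `d`
with `s` merely permutes the terms of the swap-orbit sum by `s`.
-/

section BasePointSymmetric

variable {ι D M : Type*} {h : (ι → D) → M} {a : ι}

theorem apply_comp_perm_eq_of_apply_eq
    (h_comp : ∀ s : Equiv.Perm ι, s a = a → ∀ d, h (d ∘ s) = h d)
    {s t : Equiv.Perm ι} (hst : s a = t a) (d : ι → D) : h (d ∘ s) = h (d ∘ t) := by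
  have fixes_base : (t⁻¹ * s) a = a := by
    rwa [Equiv.Perm.mul_apply, Equiv.Perm.inv_eq_iff_eq]
  have factor : d ∘ s = (d ∘ t) ∘ (t⁻¹ * s : Equiv.Perm ι) := by
    rw [Function.comp_assoc, ← Equiv.Perm.coe_mul, mul_inv_cancel_left]
  rw [factor, h_comp _ fixes_base]

theorem apply_comp_perm_comp_swap [DecidableEq ι]
    (h_comp : ∀ s : Equiv.Perm ι, s a = a → ∀ d, h (d ∘ s) = h d)
    (d : ι → D) (s : Equiv.Perm ι) (j : ι) :
    h ((d ∘ s) ∘ Equiv.swap a j) = h (d ∘ Equiv.swap a (s j)) := by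
  have same_base : (s * Equiv.swap a j) a = Equiv.swap a (s j) a := by
    rw [Equiv.Perm.mul_apply, Equiv.swap_apply_left, Equiv.swap_apply_left]
  rw [Function.comp_assoc, ← Equiv.Perm.coe_mul]
  exact apply_comp_perm_eq_of_apply_eq h_comp same_base d

theorem sum_apply_comp_perm_comp_swap [DecidableEq ι] [Fintype ι] [AddCommMonoid M]
    (h_comp : ∀ s : Equiv.Perm ι, s a = a → ∀ d, h (d ∘ s) = h d)
    (d : ι → D) (s : Equiv.Perm ι) :
    ∑ j, h ((d ∘ s) ∘ Equiv.swap a j) = ∑ j, h (d ∘ Equiv.swap a j) :=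
  Fintype.sum_equiv s _ _ (apply_comp_perm_comp_swap h_comp d s)

end BasePointSymmetric

theorem jointLaw_comp_perm_of_apply_zero {D : Type*} (f : D → ℝ≥0) (q : D → D → ℝ≥0)
    (m : ℕ) (s : Equiv.Perm (Fin (m + 1))) (hs : s 0 = 0) (d : Fin (m + 1) → D) :
    jointLaw f q m (d ∘ s) = jointLaw f q m d := by
  have mem_erase_zero (k : Fin (m + 1)) :
      k ∈ Finset.univ.erase 0 ↔ s k ∈ Finset.univ.erase 0 := by
    simp only [Finset.mem_erase, Finset.mem_univ, and_true, s.injective.ne_iff' hs]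
  simp only [jointLaw, Function.comp_apply, hs]
  congr 1
  exact Finset.prod_equiv s mem_erase_zero fun _ _ => rfl

theorem swap_orbit_sum_invariant_general {D : Type*} (f : D → ℝ≥0) (q : D → D → ℝ≥0)
    (m : ℕ) (d : Fin (m + 1) → D) (s : Equiv.Perm (Fin (m + 1))) :
    ∑ j, jointLaw f q m (swapTuple m j (d ∘ s)) = ∑ j, jointLaw f q m (swapTuple m j d) :=
  sum_apply_comp_perm_comp_swap (jointLaw_comp_perm_of_apply_zero f q m) d s

/-- **Swap-orbit sums of the joint density are invariant under swaps**: for every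
tuple `(d₀, …, d_m)` and every `i`,
`Σ_{j=0}^m h(σ_j(σ_i(d₀, …, d_m))) = Σ_{j=0}^m h(σ_j(d₀, …, d_m))`. -/
theorem swap_orbit_sum_invariant
    {D : Type*} [Countable D]
    (f : D → ℝ≥0) (q : D → D → ℝ≥0) (m : ℕ) (hm : 1 ≤ m)
    (hf : ∑' d, f d = 1)
    (hq : ∀ d, ∑' e, q e d = 1)
    (d : Fin (m + 1) → D) (i : Fin (m + 1)) :
    ∑ j, jointLaw f q m (swapTuple m j (swapTuple m i d)) =
      ∑ j, jointLaw f q m (swapTuple m j d) :=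
  swap_orbit_sum_invariant_general f q m d (Equiv.swap 0 i)
end
end

section
/- (Deterministic weighted p-value lemma.) Let m ≥ 0 be an integer, let w₀, …, w_m be nonnegative reals with Σ_{i=0}^m w_i = 1, and let s₀, …, s_m be reals. Define p_i = Σ_{j=0}^m w_j · 1[s_j ≥ s_i] for each i ∈ {0, …, m}. Then for every real α ≥ 0, Σ_{i ∈ {0,…,m} : p_i ≤ α} w_i ≤ α. -/
open scoped BigOperators Classical

section WeightedPValue

variable {ι M β : Type*} [AddCommMonoid M]

/-- The weighted p-value of the index `i` among the indices in `t`: the total weight of those whose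
score is at least that of `i`. The indicator in the sum `∑ j ∈ t, w j * 1[s j ≥ s i]` is encoded by
filtering, so that weights need only be added. -/
def weightedPValue [LE β] [DecidableLE β] (t : Finset ι) (w : ι → M) (s : ι → β) (i : ι) : M :=
  ∑ j ∈ t with s i ≤ s j, w j

variable [Preorder M] [AddLeftMono M] {t A : Finset ι} {w : ι → M}

theorem sum_le_weightedPValue [LE β] [DecidableLE β] {s : ι → β} {k : ι}
    (hw : ∀ i ∈ t, 0 ≤ w i) (hA : A ⊆ t) (hk : ∀ i ∈ A, s k ≤ s i) :
    ∑ i ∈ A, w i ≤ weightedPValue t w s k := by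
  have hA_tail : A ⊆ t.filter (s k ≤ s ·) :=
    fun i hi ↦ Finset.mem_filter.mpr ⟨hA hi, hk i hi⟩
  exact Finset.sum_le_sum_of_subset_of_nonneg hA_tail
    fun i hi _ ↦ hw i (Finset.mem_of_mem_filter i hi)

theorem exists_mem_sum_le_weightedPValue [LinearOrder β] (s : ι → β)
    (hw : ∀ i ∈ t, 0 ≤ w i) (hA : A ⊆ t) (hne : A.Nonempty) :
    ∃ k ∈ A, ∑ i ∈ A, w i ≤ weightedPValue t w s k := by
  obtain ⟨k, hkA, hk_min⟩ := A.exists_min_image s hne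
  exact ⟨k, hkA, sum_le_weightedPValue hw hA hk_min⟩

theorem deterministic_weighted_pvalue_lemma_general [DecidableLE M] [LinearOrder β] (s : ι → β)
    (hw : ∀ i ∈ t, 0 ≤ w i) {α : M} (hα : 0 ≤ α) :
    ∑ i ∈ t with weightedPValue t w s i ≤ α, w i ≤ α := by
  rcases (t.filter (weightedPValue t w s · ≤ α)).eq_empty_or_nonempty with hempty | hne
  · rwa [hempty, Finset.sum_empty]
  · obtain ⟨k, hk, hsum_le⟩ :=
      exists_mem_sum_le_weightedPValue s hw (Finset.filter_subset _ t) hne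
    exact hsum_le.trans (Finset.mem_filter.mp hk).2

end WeightedPValue

/-- **(Deterministic weighted p-value lemma.)** Let `w₀, …, w_m` be nonnegative
reals summing to `1` and `s₀, …, s_m` reals. With
`p_i = Σ_j w_j · 1[s_j ≥ s_i]`, for every `α ≥ 0` the total weight of indices
with `p_i ≤ α` is at most `α`. -/
theorem deterministic_weighted_pvalue_lemma
    (m : ℕ) (w : Fin (m + 1) → ℝ) (s : Fin (m + 1) → ℝ)
    (hw : ∀ i, 0 ≤ w i) (hsum : ∑ i, w i = 1)
    (p : Fin (m + 1) → ℝ)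
    (hp : ∀ i, p i = ∑ j, w j * (if s i ≤ s j then 1 else 0)) :
    ∀ α : ℝ, 0 ≤ α →
      ∑ i ∈ Finset.univ.filter (fun i => p i ≤ α), w i ≤ α := by
  obtain rfl : p = weightedPValue Finset.univ w s :=
    funext fun i ↦ by simp only [hp, weightedPValue, mul_ite, mul_one, mul_zero, Finset.sum_filter]
  exact fun α hα ↦ deterministic_weighted_pvalue_lemma_general s (fun i _ ↦ hw i) hα
end

section
/- (Deterministic core of the smoothed/randomized test.) Let m ≥ 0 be an integer, let w₀, …, w_m be nonnegative reals with Σ_{i=0}^m w_i = 1, and let s₀, …, s_m be reals. Define p_i = Σ_{j=0}^m w_j · 1[s_j ≥ s_i] and p_i⁻ = Σ_{j=0}^m w_j · 1[s_j > s_i]. Fix α ∈ [0,1] and define r_i = 1 if p_i ≤ α; r_i = (α − p_i⁻)/(p_i − p_i⁻) if p_i⁻ ≤ α < p_i; and r_i = 0 if α < p_i⁻. Then Σ_{i=0}^m w_i · r_i = α. -/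
open scoped BigOperators Classical

/-!
Some score level `t` is critical: the mass strictly above `t` is at most `α`, while the mass at or
above `t` exceeds `α` (unless `α` is the total mass, when everything is rejected). Scores above `t`
are then rejected outright, scores below `t` never, and the ratio used at `t` makes the mass of the
level `t` contribute exactly the missing `α - strictUpperMass w s t`.
-/

section Mass

variable {ι β M : Type*} [Fintype ι] [LinearOrder β] [AddCommMonoid M]

/-- The total weight of the indices scoring at least `t`. At `t = s i` this is the conservative
p-value `p_i`; it is defined at every level `t` because ties share the same value. -/
def upperMass (w : ι → M) (s : ι → β) (t : β) : M :=
  ∑ j with t ≤ s j, w j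

/-- The total weight of the indices scoring more than `t`. At `t = s i` this is the
anti-conservative p-value `p_i⁻`. -/
def strictUpperMass (w : ι → M) (s : ι → β) (t : β) : M :=
  ∑ j with t < s j, w j

theorem upperMass_eq_strictUpperMass_add_sum_eq (w : ι → M) (s : ι → β) (t : β) :
    upperMass w s t = strictUpperMass w s t + ∑ j with s j = t, w j := by
  have disjoint_levels :
      Disjoint ({j | t < s j} : Finset ι) ({j | s j = t} : Finset ι) :=
    Finset.disjoint_filter.2 fun _ _ h_gt h_eq => h_gt.ne' h_eq
  rw [upperMass, strictUpperMass, ← Finset.sum_union disjoint_levels, ← Finset.filter_or]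
  simp only [le_iff_lt_or_eq, eq_comm]

theorem strictUpperMass_eq_zero_or_exists_eq_upperMass (w : ι → M) (s : ι → β) (t : β) :
    strictUpperMass w s t = 0 ∨ ∃ j, t < s j ∧ strictUpperMass w s t = upperMass w s (s j) := by
  rcases ({j | t < s j} : Finset ι).eq_empty_or_nonempty with h_empty | h_nonempty
  · left
    rw [strictUpperMass, h_empty, Finset.sum_empty]
  · right
    obtain ⟨j, hj, j_min⟩ := Finset.exists_min_image _ s h_nonempty
    have t_lt : t < s j := (Finset.mem_filter_univ j).1 hj
    have lt_iff_le (k : ι) : t < s k ↔ s j ≤ s k :=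
      ⟨fun hk => j_min k ((Finset.mem_filter_univ k).2 hk), t_lt.trans_le⟩
    exact ⟨j, t_lt, by simp only [strictUpperMass, upperMass, lt_iff_le]⟩

theorem exists_upperMass_eq_sum [Nonempty ι] (w : ι → M) (s : ι → β) :
    ∃ i, upperMass w s (s i) = ∑ j, w j := by
  obtain ⟨i, i_min⟩ := Finite.exists_min s
  exact ⟨i, by simp only [upperMass, i_min, Finset.filter_true]⟩

variable [PartialOrder M] [IsOrderedAddMonoid M] {w : ι → M}

theorem upperMass_le_sum (hw : ∀ i, 0 ≤ w i) (s : ι → β) (t : β) :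
    upperMass w s t ≤ ∑ j, w j :=
  Finset.sum_le_sum_of_subset_of_nonneg (Finset.filter_subset _ _) fun j _ _ => hw j

theorem strictUpperMass_le_upperMass (hw : ∀ i, 0 ≤ w i) (s : ι → β) (t : β) :
    strictUpperMass w s t ≤ upperMass w s t :=
  Finset.sum_le_sum_of_subset_of_nonneg
    (Finset.monotone_filter_right _ fun _ _ => le_of_lt) fun j _ _ => hw j

theorem upperMass_le_strictUpperMass_of_lt (hw : ∀ i, 0 ≤ w i) (s : ι → β) {t u : β}
    (htu : t < u) : upperMass w s u ≤ strictUpperMass w s t :=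
  Finset.sum_le_sum_of_subset_of_nonneg
    (Finset.monotone_filter_right _ fun _ _ => htu.trans_le) fun j _ _ => hw j

end Mass

theorem exists_strictUpperMass_le_lt_upperMass {ι β M : Type*} [Fintype ι] [LinearOrder β]
    [AddCommMonoid M] [LinearOrder M] (w : ι → M) (s : ι → β) {α : M}
    (hα_nonneg : 0 ≤ α) (hα_lt : α < ∑ j, w j) :
    ∃ t, strictUpperMass w s t ≤ α ∧ α < upperMass w s t := by
  have : Nonempty ι := by
    by_contra h_empty
    rw [not_nonempty_iff] at h_empty
    exact hα_lt.not_ge (by simpa using hα_nonneg)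
  obtain ⟨i₀, hi₀⟩ := exists_upperMass_eq_sum w s
  have exceeding_nonempty : ({i | α < upperMass w s (s i)} : Finset ι).Nonempty :=
    ⟨i₀, (Finset.mem_filter_univ i₀).2 (hi₀ ▸ hα_lt)⟩
  obtain ⟨i, hi, i_max⟩ := Finset.exists_max_image _ s exceeding_nonempty
  refine ⟨s i, ?_, (Finset.mem_filter_univ i).1 hi⟩
  obtain h_zero | ⟨j, i_lt_j, h_eq⟩ := strictUpperMass_eq_zero_or_exists_eq_upperMass w s (s i)
  · exact h_zero.trans_le hα_nonneg
  · rw [h_eq]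
    by_contra! j_exceeds
    exact i_lt_j.not_ge (i_max j ((Finset.mem_filter_univ j).2 j_exceeds))

section Rejection

variable {ι β K : Type*} [Fintype ι] [LinearOrder β] [Field K] [LinearOrder K]

/-- The conditional probability that the randomized level-`α` test rejects an observed score `t`;
at `t = s i` this is `r_i`. -/
def rejectionProb (w : ι → K) (s : ι → β) (α : K) (t : β) : K :=
  if upperMass w s t ≤ α then 1
  else if strictUpperMass w s t ≤ α then
    (α - strictUpperMass w s t) / (upperMass w s t - strictUpperMass w s t)
  else 0

variable {w : ι → K} {s : ι → β} {α : K} {t : β}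

theorem rejectionProb_mul_sum_eq_of_critical
    (h_strict : strictUpperMass w s t ≤ α) (h_upper : α < upperMass w s t) :
    rejectionProb w s α t * ∑ j with s j = t, w j = α - strictUpperMass w s t := by
  have level_mass : ∑ j with s j = t, w j = upperMass w s t - strictUpperMass w s t :=
    eq_sub_of_add_eq' (upperMass_eq_strictUpperMass_add_sum_eq w s t).symm
  have level_mass_ne_zero : upperMass w s t - strictUpperMass w s t ≠ 0 :=
    sub_ne_zero.2 (h_strict.trans_lt h_upper).ne'
  rw [rejectionProb, if_neg h_upper.not_ge, if_pos h_strict, level_mass,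
    div_mul_cancel₀ _ level_mass_ne_zero]

variable [IsStrictOrderedRing K]

theorem rejectionProb_eq_of_critical (hw : ∀ i, 0 ≤ w i)
    (h_strict : strictUpperMass w s t ≤ α) (h_upper : α < upperMass w s t) (u : β) :
    rejectionProb w s α u =
      (if t < u then 1 else 0) + rejectionProb w s α t * (if u = t then 1 else 0) := by
  rcases lt_trichotomy t u with t_lt_u | rfl | u_lt_t
  · have u_rejected : upperMass w s u ≤ α :=
      (upperMass_le_strictUpperMass_of_lt hw s t_lt_u).trans h_strict
    simp [rejectionProb, u_rejected, t_lt_u, t_lt_u.ne']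
  · simp
  · have lt_strict : α < strictUpperMass w s u :=
      h_upper.trans_le (upperMass_le_strictUpperMass_of_lt hw s u_lt_t)
    have lt_upper : α < upperMass w s u :=
      lt_strict.trans_le (strictUpperMass_le_upperMass hw s u)
    simp [rejectionProb, lt_strict.not_ge, lt_upper.not_ge, u_lt_t.not_gt, u_lt_t.ne]

theorem sum_mul_rejectionProb_of_critical (hw : ∀ i, 0 ≤ w i)
    (h_strict : strictUpperMass w s t ≤ α) (h_upper : α < upperMass w s t) :
    ∑ i, w i * rejectionProb w s α (s i) = α := by
  calc ∑ i, w i * rejectionProb w s α (s i)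
      = ∑ i, ((if t < s i then w i else 0) +
          rejectionProb w s α t * (if s i = t then w i else 0)) := by
        refine Finset.sum_congr rfl fun i _ => ?_
        rw [rejectionProb_eq_of_critical hw h_strict h_upper, mul_add, mul_left_comm]
        simp only [mul_ite, mul_one, mul_zero]
    _ = strictUpperMass w s t + rejectionProb w s α t * ∑ i with s i = t, w i := by
        rw [Finset.sum_add_distrib, ← Finset.mul_sum, ← Finset.sum_filter, ← Finset.sum_filter,
          strictUpperMass]
    _ = α := by
        rw [rejectionProb_mul_sum_eq_of_critical h_strict h_upper, add_sub_cancel]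

theorem deterministic_smoothed_pvalue_lemma_general (hw : ∀ i, 0 ≤ w i) (s : ι → β)
    (hα_nonneg : 0 ≤ α) (hα_le : α ≤ ∑ i, w i) :
    ∑ i, w i * rejectionProb w s α (s i) = α := by
  rcases hα_le.eq_or_lt with rfl | hα_lt
  · simp only [rejectionProb, upperMass_le_sum hw, if_true, mul_one]
  · obtain ⟨t, h_strict, h_upper⟩ := exists_strictUpperMass_le_lt_upperMass w s hα_nonneg hα_lt
    exact sum_mul_rejectionProb_of_critical hw h_strict h_upper

end Rejection

/-- **(Deterministic core of the smoothed/randomized test.)** With nonnegative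
weights `w` summing to `1`, scores `s`, `p_i = Σ_j w_j · 1[s_j ≥ s_i]`,
`p_i⁻ = Σ_j w_j · 1[s_j > s_i]`, and conditional rejection probabilities
`r_i = 1` if `p_i ≤ α`, `r_i = (α − p_i⁻)/(p_i − p_i⁻)` if `p_i⁻ ≤ α < p_i`,
and `r_i = 0` if `α < p_i⁻`, one has `Σ_i w_i · r_i = α`. -/
theorem deterministic_smoothed_pvalue_lemma
    (m : ℕ) (w : Fin (m + 1) → ℝ) (s : Fin (m + 1) → ℝ)
    (hw : ∀ i, 0 ≤ w i) (hsum : ∑ i, w i = 1)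
    (α : ℝ) (hα0 : 0 ≤ α) (hα1 : α ≤ 1)
    (p pminus r : Fin (m + 1) → ℝ)
    (hp : ∀ i, p i = ∑ j, w j * (if s i ≤ s j then 1 else 0))
    (hpminus : ∀ i, pminus i = ∑ j, w j * (if s i < s j then 1 else 0))
    (hr : ∀ i, r i =
      if p i ≤ α then 1
      else if pminus i ≤ α then (α - pminus i) / (p i - pminus i)
      else 0) :
    ∑ i, w i * r i = α := by
  have r_eq (i : Fin (m + 1)) : r i = rejectionProb w s α (s i) := by
    simp only [hr, hp, hpminus, mul_ite, mul_one, mul_zero, rejectionProb, upperMass,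
      strictUpperMass, Finset.sum_filter]
  simpa only [r_eq] using
    deterministic_smoothed_pvalue_lemma_general hw s hα0 (hα1.trans_eq hsum.symm)
end

section
/- (Proposition 1, Environments 1 and 2: non-reactive environment and MDP, identity permutation.) Suppose the law of the data has probability mass function f(d) = ∏_{t=1}^T pC_t(c_t; (c₁,y₁), …, (c_{t−1},y_{t−1})) · a_t(x_t; c_t, h_{t−1}(d)) · r_t(y_t; c_t, x_t), where pC_t : 𝒞 × (𝒞×𝒴)^(t−1) → ℝ≥0 is the context law at time t, depending only on past contexts and responses (weak non-reactivity), and r_t : 𝒴 × 𝒞 × 𝒳 → ℝ≥0 is the response law at time t (Markovianity). Assume the null hypothesis H₀^{⊥⊥,g}: for all t, all y ∈ 𝒴, c ∈ 𝒞, and all x, x' ∈ 𝒳 with g(x) = g(x'), r_t(y; c, x) = r_t(y; c, x'). Fix a trajectory d. Then for every trajectory d̃ with c̃_t = c_t, ỹ_t = y_t, and g(x̃_t) = g(x_t) for all t ∈ {1, …, T}, one has f(d̃) = K(d) · f̂(d̃), where K(d) = ∏_{t=1}^T pC_t(c_t; (c₁,y₁), …, (c_{t−1},y_{t−1})) ·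 r_t(y_t; c_t, x_t) depends only on d (not on d̃). In particular, the unnormalized likelihood f̂ is proportional to f across all such resamples d̃ with a common constant of proportionality. -/
open scoped NNReal BigOperators

noncomputable section

variable {C X Y G : Type*}

/-- Embedding of an index `s < t` into `Fin T`. -/
def emb {T : ℕ} (t : Fin T) (s : Fin (t : ℕ)) : Fin T :=
  ⟨(s : ℕ), lt_trans s.isLt t.isLt⟩

/-- The history `h_{t−1}(d)`: the prefix of the trajectory strictly before time `t`. -/
def hist {T : ℕ} (d : Fin T → C × X × Y) (t : Fin T) : Fin (t : ℕ) → C × X × Y :=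
  fun s => d (emb t s)

/-- The context-response prefix `((c₁,y₁), …, (c_{t−1},y_{t−1}))`. -/
def cyHist {T : ℕ} (d : Fin T → C × X × Y) (t : Fin T) : Fin (t : ℕ) → C × Y :=
  fun s => ((d (emb t s)).1, (d (emb t s)).2.2)

/-- The unnormalized assignment likelihood
`f̂(d) = ∏_{t=1}^T a_t(x_t; c_t, h_{t−1}(d))`. -/
def assignLik {T : ℕ} (a : (t : Fin T) → X → C → (Fin (t : ℕ) → C × X × Y) → ℝ≥0)
    (d : Fin T → C × X × Y) : ℝ≥0 :=
  ∏ t, a t (d t).2.1 (d t).1 (hist d t)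

/-- The full data law in a non-reactive (weakly non-reactive, Markovian)
environment: `f(d) = ∏_t pC_t(c_t; (c,y)-prefix) · a_t(x_t; c_t, h_{t−1}) ·
r_t(y_t; c_t, x_t)`. -/
def trajLaw {T : ℕ}
    (pC : (t : Fin T) → C → (Fin (t : ℕ) → C × Y) → ℝ≥0)
    (a : (t : Fin T) → X → C → (Fin (t : ℕ) → C × X × Y) → ℝ≥0)
    (r : Fin T → Y → C → X → ℝ≥0)
    (d : Fin T → C × X × Y) : ℝ≥0 :=
  ∏ t, pC t (d t).1 (cyHist d t) * a t (d t).2.1 (d t).1 (hist d t) *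
    r t (d t).2.2 (d t).1 (d t).2.1

/-- The environment's share `K(d) = ∏_t pC_t(c_t; (c,y)-prefix) · r_t(y_t; c_t, x_t)` of the data
law: the product of the factors of `trajLaw` other than the known assignment probabilities. -/
def envLik {T : ℕ}
    (pC : (t : Fin T) → C → (Fin (t : ℕ) → C × Y) → ℝ≥0)
    (r : Fin T → Y → C → X → ℝ≥0)
    (d : Fin T → C × X × Y) : ℝ≥0 :=
  ∏ t, pC t (d t).1 (cyHist d t) * r t (d t).2.2 (d t).1 (d t).2.1

section

variable {T : ℕ}
  (pC : (t : Fin T) → C → (Fin (t : ℕ) → C × Y) → ℝ≥0)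
  (a : (t : Fin T) → X → C → (Fin (t : ℕ) → C × X × Y) → ℝ≥0)
  (r : Fin T → Y → C → X → ℝ≥0)
  {d d' : Fin T → C × X × Y}

theorem trajLaw_eq_envLik_mul_assignLik (d : Fin T → C × X × Y) :
    trajLaw pC a r d = envLik pC r d * assignLik a d := by
  simp only [trajLaw, envLik, assignLik, ← Finset.prod_mul_distrib, mul_right_comm]

theorem cyHist_congr {t : Fin T}
    (hc : ∀ s < t, (d' s).1 = (d s).1) (hy : ∀ s < t, (d' s).2.2 = (d s).2.2) :
    cyHist d' t = cyHist d t := by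
  funext s
  have emb_lt : emb t s < t := s.isLt
  exact Prod.ext (hc _ emb_lt) (hy _ emb_lt)

theorem envLik_congr
    (hc : ∀ t, (d' t).1 = (d t).1) (hy : ∀ t, (d' t).2.2 = (d t).2.2)
    (hr : ∀ t, r t (d t).2.2 (d t).1 (d' t).2.1 = r t (d t).2.2 (d t).1 (d t).2.1) :
    envLik pC r d' = envLik pC r d := by
  refine Finset.prod_congr rfl fun t _ => ?_
  rw [cyHist_congr (fun s _ => hc s) (fun s _ => hy s), hc t, hy t, hr t]

theorem prop1_nonreactive_identity_general (g : X → G)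
    (hnull : ∀ (t : Fin T) (y : Y) (c : C) (x x' : X),
      g x = g x' → r t y c x = r t y c x')
    (hd : ∀ t, (d' t).1 = (d t).1 ∧ (d' t).2.2 = (d t).2.2 ∧ g (d' t).2.1 = g (d t).2.1) :
    trajLaw pC a r d' = envLik pC r d * assignLik a d' := by
  have envLik_eq : envLik pC r d' = envLik pC r d :=
    envLik_congr pC r (fun t => (hd t).1) (fun t => (hd t).2.1)
      fun t => hnull t _ _ _ _ (hd t).2.2
  rw [trajLaw_eq_envLik_mul_assignLik, envLik_eq]

end

/-- **(Proposition 1, Environments 1 and 2: identity permutation.)** Under the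
conditional independence null `H₀^{⊥⊥,g}`, for any resample `d̃` with the same
contexts, responses, and `g`-evaluations of actions as `d`, one has
`f(d̃) = K(d) · f̂(d̃)` with `K(d)` depending only on `d`. -/
theorem prop1_nonreactive_identity
    [Countable C] [Countable X] [Countable Y]
    (T : ℕ) (hT : 1 ≤ T)
    (pC : (t : Fin T) → C → (Fin (t : ℕ) → C × Y) → ℝ≥0)
    (a : (t : Fin T) → X → C → (Fin (t : ℕ) → C × X × Y) → ℝ≥0)
    (r : Fin T → Y → C → X → ℝ≥0)
    (g : X → G)
    (hnull : ∀ (t : Fin T) (y : Y) (c : C) (x x' : X),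
      g x = g x' → r t y c x = r t y c x')
    (d : Fin T → C × X × Y) :
    ∀ dtil : Fin T → C × X × Y,
      (∀ t, (dtil t).1 = (d t).1 ∧ (dtil t).2.2 = (d t).2.2 ∧
        g (dtil t).2.1 = g (d t).2.1) →
      trajLaw pC a r dtil =
        (∏ t, pC t (d t).1 (cyHist d t) * r t (d t).2.2 (d t).1 (d t).2.1) *
          assignLik a dtil :=
  fun _ hd => prop1_nonreactive_identity_general pC a r g hnull hd
end
end

section
/- (Generalization without the Markovianity assumption, Appendix C.2.) Suppose the law of the data has the fully general factorization f(d) = ∏_{t=1}^T pC_t(c_t; h_{t−1}(d)) · a_t(x_t; c_t, h_{t−1}(d)) · r_t(y_t; c_t, x_t, h_{t−1}(d)), where pC_t is the context law at time t given the full history and r_t is the response law at time t given the current context, current action, and full history. Let g₁, …, g_T : 𝒳 → G and assume the null hypothesis: pC_t and r_t depend on actions only through their g-evaluations; precisely, whenever two histories h = ((c₁,x₁,y₁),…,(c_{t−1},x_{t−1},y_{t−1})) and h' = ((c₁,x'₁,y₁),…,(c_{t−1},x'_{t−1},y_{t−1})) have identical context and response sequences and satisfy g_s(x_s) = g_s(x'_s)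 for all s ≤ t−1, then pC_t(c; h) = pC_t(c; h') for every c ∈ 𝒞, and moreover r_t(y; c, x_t, h) = r_t(y; c, x'_t, h') for every y ∈ 𝒴, c ∈ 𝒞 and every pair of current actions x_t, x'_t with g_t(x_t) = g_t(x'_t). Fix a trajectory d. Then for every trajectory d̃ with c̃_t = c_t, ỹ_t = y_t, and g_t(x̃_t) = g_t(x_t) for all t ∈ {1, …, T}, one has f(d̃) = K(d) · f̂(d̃), where K(d) = ∏_{t=1}^T pC_t(c_t; h_{t−1}(d)) · r_t(y_t; c_t, x_t, h_{t−1}(d)) depends only on d. -/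
open scoped NNReal BigOperators

noncomputable section

variable {C X Y G : Type*}

/-- The fully general (non-Markovian) data law:
`f(d) = ∏_t pC_t(c_t; h_{t−1}(d)) · a_t(x_t; c_t, h_{t−1}(d)) ·
r_t(y_t; c_t, x_t, h_{t−1}(d))`. -/
def genTrajLaw {T : ℕ}
    (pC : (t : Fin T) → C → (Fin (t : ℕ) → C × X × Y) → ℝ≥0)
    (a : (t : Fin T) → X → C → (Fin (t : ℕ) → C × X × Y) → ℝ≥0)
    (r : (t : Fin T) → Y → C → X → (Fin (t : ℕ) → C × X × Y) → ℝ≥0)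
    (d : Fin T → C × X × Y) : ℝ≥0 :=
  ∏ t, pC t (d t).1 (hist d t) * a t (d t).2.1 (d t).1 (hist d t) *
    r t (d t).2.2 (d t).1 (d t).2.1 (hist d t)

/-- Two records of contexts, actions and responses over the same times agree up to resampling the
actions within the fibres of `g`. The index type is arbitrary, so that the relation applies both to
trajectories (`Fin T`) and to histories (`Fin t`, with `g` restricted to times before `t`). -/
def EqUpToActions {ι : Type*} (g : ι → X → G) (d d' : ι → C × X × Y) : Prop :=
  ∀ s, (d s).1 = (d' s).1 ∧ (d s).2.2 = (d' s).2.2 ∧ g s (d s).2.1 = g s (d' s).2.1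

/-- The null hypothesis: the context laws `pC` and the response laws `r` depend on actions, past
and current, only through their `g`-evaluations. -/
structure NullHypothesis {T : ℕ} (g : Fin T → X → G)
    (pC : (t : Fin T) → C → (Fin (t : ℕ) → C × X × Y) → ℝ≥0)
    (r : (t : Fin T) → Y → C → X → (Fin (t : ℕ) → C × X × Y) → ℝ≥0) : Prop where
  context_congr : ∀ {t : Fin T} {h h' : Fin (t : ℕ) → C × X × Y},
    EqUpToActions (fun s => g (emb t s)) h h' → ∀ c, pC t c h = pC t c h'
  response_congr : ∀ {t : Fin T} {h h' : Fin (t : ℕ) → C × X × Y},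
    EqUpToActions (fun s => g (emb t s)) h h' →
      ∀ y c x x', g t x = g t x' → r t y c x h = r t y c x' h'

/-- The environment's share `K(d)` of the likelihood of `d`: the product of all context and response
factors, complementary to `assignLik`. -/
def environmentLik {T : ℕ}
    (pC : (t : Fin T) → C → (Fin (t : ℕ) → C × X × Y) → ℝ≥0)
    (r : (t : Fin T) → Y → C → X → (Fin (t : ℕ) → C × X × Y) → ℝ≥0)
    (d : Fin T → C × X × Y) : ℝ≥0 :=
  ∏ t, pC t (d t).1 (hist d t) * r t (d t).2.2 (d t).1 (d t).2.1 (hist d t)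

theorem genTrajLaw_eq_environmentLik_mul_assignLik {T : ℕ}
    (pC : (t : Fin T) → C → (Fin (t : ℕ) → C × X × Y) → ℝ≥0)
    (a : (t : Fin T) → X → C → (Fin (t : ℕ) → C × X × Y) → ℝ≥0)
    (r : (t : Fin T) → Y → C → X → (Fin (t : ℕ) → C × X × Y) → ℝ≥0)
    (d : Fin T → C × X × Y) :
    genTrajLaw pC a r d = environmentLik pC r d * assignLik a d := by
  unfold genTrajLaw environmentLik assignLik
  rw [← Finset.prod_mul_distrib]
  exact Finset.prod_congr rfl fun _ _ => mul_right_comm _ _ _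

section

variable {T : ℕ} {g : Fin T → X → G} {d d' : Fin T → C × X × Y}
  {pC : (t : Fin T) → C → (Fin (t : ℕ) → C × X × Y) → ℝ≥0}
  {r : (t : Fin T) → Y → C → X → (Fin (t : ℕ) → C × X × Y) → ℝ≥0}

theorem EqUpToActions.hist (hd : EqUpToActions g d d') (t : Fin T) :
    EqUpToActions (fun s => g (emb t s)) (hist d t) (hist d' t) :=
  fun s => hd (emb t s)

theorem NullHypothesis.environmentLik_congr (hnull : NullHypothesis g pC r)
    (hd : EqUpToActions g d d') : environmentLik pC r d = environmentLik pC r d' := by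
  refine Finset.prod_congr rfl fun t _ => ?_
  obtain ⟨hcontext, hresponse, haction⟩ := hd t
  rw [hcontext, hresponse, hnull.context_congr (hd.hist t),
    hnull.response_congr (hd.hist t) _ _ _ _ haction]

theorem general_non_markov_proportionality_general (hnull : NullHypothesis g pC r)
    (a : (t : Fin T) → X → C → (Fin (t : ℕ) → C × X × Y) → ℝ≥0) (hd : EqUpToActions g d d') :
    genTrajLaw pC a r d = environmentLik pC r d' * assignLik a d := by
  rw [genTrajLaw_eq_environmentLik_mul_assignLik, hnull.environmentLik_congr hd]

end

/-- **(Generalization without the Markovianity assumption, Appendix C.2.)**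
If the context and response laws depend on past actions only through their
`g`-evaluations, then any resample `d̃` with the same contexts, responses, and
`g_t`-evaluations of actions as `d` satisfies `f(d̃) = K(d) · f̂(d̃)`. -/
theorem general_non_markov_proportionality
    [Countable C] [Countable X] [Countable Y]
    (T : ℕ) (hT : 1 ≤ T)
    (pC : (t : Fin T) → C → (Fin (t : ℕ) → C × X × Y) → ℝ≥0)
    (a : (t : Fin T) → X → C → (Fin (t : ℕ) → C × X × Y) → ℝ≥0)
    (r : (t : Fin T) → Y → C → X → (Fin (t : ℕ) → C × X × Y) → ℝ≥0)
    (g : Fin T → X → G)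
    (hnull : ∀ (t : Fin T) (h h' : Fin (t : ℕ) → C × X × Y),
      (∀ s, (h s).1 = (h' s).1 ∧ (h s).2.2 = (h' s).2.2 ∧
        g (emb t s) (h s).2.1 = g (emb t s) (h' s).2.1) →
      (∀ c, pC t c h = pC t c h') ∧
      (∀ (y : Y) (c : C) (x x' : X),
        g t x = g t x' → r t y c x h = r t y c x' h'))
    (d : Fin T → C × X × Y) :
    ∀ dtil : Fin T → C × X × Y,
      (∀ t, (dtil t).1 = (d t).1 ∧ (dtil t).2.2 = (d t).2.2 ∧
        g t (dtil t).2.1 = g t (d t).2.1) →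
      genTrajLaw pC a r dtil =
        (∏ t, pC t (d t).1 (hist d t) *
          r t (d t).2.2 (d t).1 (d t).2.1 (hist d t)) *
          assignLik a dtil := by
  exact fun _ hdtil => general_non_markov_proportionality_general
    ⟨fun hh => (hnull _ _ _ hh).1, fun hh => (hnull _ _ _ hh).2⟩ a hdtil
end
end
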